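/- arXiv:1608.06956 — 2 statements merged into one kernel-verified Lean document; each statement's English description precedes it below -/
import Mathlib

section
/- Let f: M → N be a degree-preserving morphism of Z-graded k[t]-modules with t^{2ε}·M = 0. Then N and coker f are 2ε-interleaved; explicitly, the quotient map η: N → coker f and θ: coker f → N given by θ([n]) = t^{2ε}·n satisfy ηθ = multiplication by t^{2ε} and θη = multiplication by t^{2ε}. -/
/-- A `ℤ`-graded `k[t]`-module, i.e. a persistence module over `ℤ`. -/
structure PersMod (k : Type*) [Field k] where
  V : ℤ → Type*
  [grp : ∀ j, AddCommGroup (V j)]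
  [mod : ∀ j, Module k (V j)]
  map : ∀ {i j : ℤ}, i ≤ j → (V i →ₗ[k] V j)
  map_id : ∀ i : ℤ, map (le_refl i) = LinearMap.id
  map_comp : ∀ {i j l : ℤ} (hij : i ≤ j) (hjl : j ≤ l),
    (map hjl).comp (map hij) = map (hij.trans hjl)

attribute [instance] PersMod.grp PersMod.mod

variable {k : Type*} [Field k]

/-- An `ε`-morphism of persistence modules (raises degree by `ε`). -/
structure EHom (M N : PersMod k) (ε : ℕ) where
  f : ∀ j : ℤ, M.V j →ₗ[k] N.V (j + ε)
  natural : ∀ {i j : ℤ} (h : i ≤ j),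
    (f j).comp (M.map h) = (N.map (by omega : (i : ℤ) + (ε : ℤ) ≤ j + (ε : ℤ))).comp (f i)

/-- An `ε`-interleaving: a pair of `ε`-morphisms whose composites in both
orders are multiplication by `t^{2ε}` (the structure maps shifting by `2ε`). -/
structure Interleaving (M N : PersMod k) (ε : ℕ) where
  φ : EHom M N ε
  ψ : EHom N M ε
  comp_φψ : ∀ j : ℤ, (ψ.f (j + ε)).comp (φ.f j)
      = M.map (by omega : (j : ℤ) ≤ j + (ε : ℤ) + (ε : ℤ))
  comp_ψφ : ∀ j : ℤ, (φ.f (j + ε)).comp (ψ.f j)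
      = N.map (by omega : (j : ℤ) ≤ j + (ε : ℤ) + (ε : ℤ))

/-- `t^{2ε} · M = 0`. -/
def IsTrivial (M : PersMod k) (ε : ℕ) : Prop :=
  ∀ j : ℤ, (M.map (by omega : (j : ℤ) ≤ j + 2 * (ε : ℤ))) = 0

/-- A degree-preserving morphism of persistence modules. -/
structure Hom0 (M N : PersMod k) where
  f : ∀ j : ℤ, M.V j →ₗ[k] N.V j
  natural : ∀ {i j : ℤ} (h : i ≤ j), (f j).comp (M.map h) = (N.map h).comp (f i)

/-- `0 → M → N → P → 0` is a short exact sequence of degree-preserving morphisms. -/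
def IsShortExact {M N P : PersMod k} (f : Hom0 M N) (g : Hom0 N P) : Prop :=
  (∀ j : ℤ, Function.Injective (f.f j)) ∧ (∀ j : ℤ, Function.Surjective (g.f j)) ∧
    ∀ j : ℤ, LinearMap.range (f.f j) = LinearMap.ker (g.f j)

/-- The zero persistence module. -/
def zeroPM : PersMod k where
  V _ := PUnit
  map _ := 0
  map_id _ := LinearMap.ext fun _ => rfl
  map_comp _ _ := LinearMap.ext fun _ => rfl

/-- The cokernel of a degree-preserving morphism, as a persistence module. -/
def cokerPM {M N : PersMod k} (f : Hom0 M N) : PersMod k where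
  V j := N.V j ⧸ LinearMap.range (f.f j)
  map {i j} h := Submodule.mapQ _ _ (N.map h) (by
    rintro x ⟨m, rfl⟩
    have h1 := LinearMap.congr_fun (f.natural h) m
    simp only [LinearMap.coe_comp, Function.comp_apply] at h1
    exact Submodule.mem_comap.mpr ⟨M.map h m, h1⟩)
  map_id i := by
    apply LinearMap.ext
    intro x
    obtain ⟨y, rfl⟩ := Submodule.Quotient.mk_surjective _ x
    rw [Submodule.mapQ_apply, N.map_id]
    rfl
  map_comp {i j l} hij hjl := by
    apply LinearMap.ext
    intro x
    obtain ⟨y, rfl⟩ := Submodule.Quotient.mk_surjective _ x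
    simp only [LinearMap.coe_comp, Function.comp_apply, Submodule.mapQ_apply]
    rw [← LinearMap.comp_apply, N.map_comp]

/-! If `t^δ f = 0`, multiplication by `t^δ` on `N` descends along the projection `η : N → coker f`
to a `δ`-morphism `θ` with `θη = t^δ`. Then `ηθη = η t^δ = t^δ η`, and cancelling the surjection `η`
gives `ηθ = t^δ`. The pair `(t^δ η, θ)` is then a `δ`-interleaving. -/

/-- Multiplication by `t^δ`, as a `δ`-morphism from `M` to itself. -/
def PersMod.tPow (M : PersMod k) (δ : ℕ) : EHom M M δ where
  f _ := M.map (by omega)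
  natural _ := by rw [M.map_comp, M.map_comp]

theorem IsTrivial.tPow_two_mul_eq_zero {M : PersMod k} {ε : ℕ} (hM : IsTrivial M ε) (j : ℤ) :
    (M.tPow (2 * ε)).f j = 0 := by
  have hle : j + 2 * (ε : ℤ) ≤ j + (2 * ε : ℕ) := by omega
  calc (M.tPow (2 * ε)).f j
    _ = M.map hle ∘ₗ M.map (by omega) := (M.map_comp _ _).symm
    _ = 0 := by rw [hM j, LinearMap.comp_zero]

/-- The composite `φ ∘ g` of a degree-preserving morphism `g` with a `δ`-morphism `φ`, used to
give a degree-preserving morphism a positive degree. -/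
def EHom.compHom0 {L M N : PersMod k} {δ : ℕ} (φ : EHom M N δ) (g : Hom0 L M) : EHom L N δ where
  f j := φ.f j ∘ₗ g.f j
  natural h := by
    rw [LinearMap.comp_assoc, g.natural, ← LinearMap.comp_assoc, φ.natural, LinearMap.comp_assoc]

namespace Hom0

variable {M N P : PersMod k} {δ : ℕ}

theorem comp_tPow (g : Hom0 M N) (j : ℤ) :
    g.f (j + δ) ∘ₗ (M.tPow δ).f j = (N.tPow δ).f j ∘ₗ g.f j :=
  g.natural _

theorem comp_eq_tPow_of_surjective {g : Hom0 M N} {θ : EHom N M δ}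
    (hg : ∀ j, Function.Surjective (g.f j)) (hθg : ∀ j, θ.f j ∘ₗ g.f j = (M.tPow δ).f j) (j : ℤ) :
    g.f (j + δ) ∘ₗ θ.f j = (N.tPow δ).f j := by
  rw [← LinearMap.cancel_right (hg j), LinearMap.comp_assoc, hθg, comp_tPow]

/-- The quotient map `η : N → coker f`. -/
def cokerProj (f : Hom0 M N) : Hom0 N (cokerPM f) where
  f j := (LinearMap.range (f.f j)).mkQ
  natural _ := rfl

theorem cokerProj_surjective (f : Hom0 M N) (j : ℤ) : Function.Surjective (f.cokerProj.f j) :=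
  Submodule.mkQ_surjective _

/-- The `δ`-morphism `coker f → P` induced by a `δ`-morphism `φ : N → P` with `φ ∘ f = 0`; for
`φ = t^δ` this is the map `θ`. -/
def cokerDesc (f : Hom0 M N) (φ : EHom N P δ) (hφ : ∀ j, φ.f j ∘ₗ f.f j = 0) :
    EHom (cokerPM f) P δ where
  f j := (LinearMap.range (f.f j)).liftQ (φ.f j) (LinearMap.range_le_ker_iff.mpr (hφ j))
  natural h := Submodule.linearMap_qext _ (φ.natural h)

theorem cokerDesc_comp_cokerProj (f : Hom0 M N) (φ : EHom N P δ)
    (hφ : ∀ j, φ.f j ∘ₗ f.f j = 0) (j : ℤ) :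
    (f.cokerDesc φ hφ).f j ∘ₗ f.cokerProj.f j = φ.f j :=
  Submodule.liftQ_mkQ _ _ _

end Hom0

/-- The `δ`-interleaving given by a degree-preserving `g : M → N` and a `δ`-morphism `θ : N → M`
which are inverse to each other up to `t^δ`. The forward morphism is `t^δ g`, so that both
morphisms have degree `δ`. -/
def Interleaving.ofHom0 {M N : PersMod k} {δ : ℕ} (g : Hom0 M N) (θ : EHom N M δ)
    (hθg : ∀ j, θ.f j ∘ₗ g.f j = (M.tPow δ).f j)
    (hgθ : ∀ j, g.f (j + δ) ∘ₗ θ.f j = (N.tPow δ).f j) : Interleaving M N δ where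
  φ := (N.tPow δ).compHom0 g
  ψ := θ
  comp_φψ j :=
    calc θ.f (j + δ) ∘ₗ (N.tPow δ).f j ∘ₗ g.f j
      _ = (θ.f (j + δ) ∘ₗ g.f (j + δ)) ∘ₗ (M.tPow δ).f j := by
        rw [← g.comp_tPow, LinearMap.comp_assoc]
      _ = (M.tPow δ).f (j + δ) ∘ₗ (M.tPow δ).f j := by rw [hθg]
      _ = M.map (by omega) := M.map_comp _ _
  comp_ψφ j :=
    calc ((N.tPow δ).f (j + δ) ∘ₗ g.f (j + δ)) ∘ₗ θ.f j
      _ = (N.tPow δ).f (j + δ) ∘ₗ (N.tPow δ).f j := by rw [LinearMap.comp_assoc, hgθ]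
      _ = N.map (by omega) := N.map_comp _ _

theorem coker_interleaved_general {M N : PersMod k} (δ : ℕ) (f : Hom0 M N)
    (hf : ∀ j, (N.tPow δ).f j ∘ₗ f.f j = 0) : Nonempty (Interleaving N (cokerPM f) δ) := by
  have hθη := f.cokerDesc_comp_cokerProj (N.tPow δ) hf
  have hηθ := Hom0.comp_eq_tPow_of_surjective f.cokerProj_surjective hθη
  exact ⟨.ofHom0 f.cokerProj (f.cokerDesc (N.tPow δ) hf) hθη hηθ⟩

/-- If the domain of `f : M → N` satisfies `t^{2ε}·M = 0`, then `N` and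
`coker f` are `2ε`-interleaved. -/
theorem coker_interleaved {M N : PersMod k} (ε : ℕ) (f : Hom0 M N) (hM : IsTrivial M ε) :
    Nonempty (Interleaving N (cokerPM f) (2 * ε)) :=
  coker_interleaved_general (2 * ε) f fun j => by
    rw [← f.comp_tPow, hM.tPow_two_mul_eq_zero, LinearMap.comp_zero]
end

section
/- Right interleavings satisfy a triangle inequality: if M is 2ε₁-right interleaved with N and N is 2ε₂-right interleaved with P, then M is 2(ε₁+ε₂)-right interleaved with P. -/
universe u v

variable {k : Type*} [Field k]

/-- `N` is `2ε`-right interleaved with `P`: there is a short exact sequence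
`0 → K → N → P → 0` with `t^{2ε}·K = 0`. -/
def RightInterleaved {k : Type u} [Field k] (N P : PersMod.{u, v} k) (ε : ℕ) : Prop :=
  ∃ (K : PersMod.{u, v} k) (f : Hom0 K N) (g : Hom0 N P), IsShortExact f g ∧ IsTrivial K ε

/-!
A right interleaving is a degreewise surjective morphism whose kernel is annihilated by `t^{2ε}`.
For two such morphisms `M → N → P`, an element of `M` that dies in `P` is sent by `t^{2ε₂}` to an
element that already dies in `N`, and `t^{2ε₁}` annihilates the latter.
-/

namespace PersMod

theorem ker_map_le_ker_map (M : PersMod k) {i j l : ℤ} (hij : i ≤ j) (hjl : j ≤ l) :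
    LinearMap.ker (M.map hij) ≤ LinearMap.ker (M.map (hij.trans hjl)) := by
  rw [← M.map_comp hij hjl]
  exact LinearMap.ker_le_ker_comp _ _

end PersMod

namespace Hom0

variable {M N P : PersMod k}

theorem map_apply (g : Hom0 M N) {i j : ℤ} (hij : i ≤ j) (x : M.V i) :
    g.f j (M.map hij x) = N.map hij (g.f i x) :=
  LinearMap.congr_fun (g.natural hij) x

/-- Composition of degree-preserving morphisms, computed degreewise. -/
def comp (g : Hom0 N P) (f : Hom0 M N) : Hom0 M P where
  f j := (g.f j).comp (f.f j)
  natural hij := by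
    rw [LinearMap.comp_assoc, f.natural hij, ← LinearMap.comp_assoc, g.natural hij,
      LinearMap.comp_assoc]

theorem ker_comp_le_ker_map {f : Hom0 M N} {g : Hom0 N P} {i j l : ℤ} {hij : i ≤ j} {hjl : j ≤ l}
    (hg : LinearMap.ker (g.f i) ≤ LinearMap.ker (N.map hij))
    (hf : LinearMap.ker (f.f j) ≤ LinearMap.ker (M.map hjl)) :
    LinearMap.ker ((g.comp f).f i) ≤ LinearMap.ker (M.map (hij.trans hjl)) := by
  intro x hx
  have map_mem_ker : M.map hij x ∈ LinearMap.ker (f.f j) := by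
    rw [LinearMap.mem_ker, f.map_apply]
    exact hg hx
  rw [← M.map_comp hij hjl]
  exact hf map_mem_ker

/-- The kernel of a degree-preserving morphism, computed degreewise, with the structure maps
restricted from the source. -/
def ker (g : Hom0 M N) : PersMod k where
  V j := LinearMap.ker (g.f j)
  map hij := (M.map hij).restrict fun x hx => by
    rw [LinearMap.mem_ker] at hx ⊢
    rw [g.map_apply, hx, map_zero]
  map_id i := LinearMap.ext fun x => Subtype.ext (LinearMap.congr_fun (M.map_id i) x)
  map_comp hij hjl :=
    LinearMap.ext fun x => Subtype.ext (LinearMap.congr_fun (M.map_comp hij hjl) x)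

/-- The inclusion of the kernel of a degree-preserving morphism into its source. -/
def kerInclusion (g : Hom0 M N) : Hom0 g.ker M where
  f j := (LinearMap.ker (g.f j)).subtype
  natural _ := rfl

theorem isShortExact_kerInclusion (g : Hom0 M N) (hg : ∀ j, Function.Surjective (g.f j)) :
    IsShortExact g.kerInclusion g :=
  ⟨fun _ => Subtype.val_injective, hg, fun j => (LinearMap.ker (g.f j)).range_subtype⟩

end Hom0

theorem IsShortExact.map_eq_zero_iff {K N P : PersMod k} {f : Hom0 K N} {g : Hom0 N P}
    (hfg : IsShortExact f g) {i j : ℤ} (hij : i ≤ j) :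
    K.map hij = 0 ↔ LinearMap.ker (g.f i) ≤ LinearMap.ker (N.map hij) := by
  obtain ⟨f_injective, -, range_eq_ker⟩ := hfg
  rw [← range_eq_ker i, LinearMap.range_le_ker_iff, ← f.natural hij,
    ← LinearMap.cancel_left (f_injective j), LinearMap.comp_zero]

theorem rightInterleaved_iff {k : Type u} [Field k] {N P : PersMod.{u, v} k} {ε : ℕ} :
    RightInterleaved N P ε ↔ ∃ g : Hom0 N P, (∀ j, Function.Surjective (g.f j)) ∧
      ∀ j : ℤ, LinearMap.ker (g.f j) ≤
        LinearMap.ker (N.map (by omega : j ≤ j + 2 * (ε : ℤ))) := by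
  constructor
  · rintro ⟨K, f, g, hfg, hK⟩
    exact ⟨g, hfg.2.1, fun j => (hfg.map_eq_zero_iff _).mp (hK j)⟩
  · rintro ⟨g, hg, hker⟩
    have hexact := g.isShortExact_kerInclusion hg
    exact ⟨g.ker, g.kerInclusion, g, hexact, fun j => (hexact.map_eq_zero_iff _).mpr (hker j)⟩

/-- Triangle inequality for right interleavings. -/
theorem right_interleaved_triangle (M N P : PersMod k) (ε₁ ε₂ : ℕ)
    (h1 : RightInterleaved M N ε₁) (h2 : RightInterleaved N P ε₂) :
    RightInterleaved M P (ε₁ + ε₂) := by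
  rw [rightInterleaved_iff] at h1 h2 ⊢
  obtain ⟨g₁, hg₁, hker₁⟩ := h1
  obtain ⟨g₂, hg₂, hker₂⟩ := h2
  refine ⟨g₂.comp g₁, fun j => (hg₂ j).comp (hg₁ j), fun j => ?_⟩
  have hshift : j + 2 * (ε₂ : ℤ) + 2 * (ε₁ : ℤ) ≤ j + 2 * ((ε₁ + ε₂ : ℕ) : ℤ) := by
    push_cast
    omega
  calc LinearMap.ker ((g₂.comp g₁).f j)
      ≤ LinearMap.ker (M.map (by omega : j ≤ j + 2 * (ε₂ : ℤ) + 2 * (ε₁ : ℤ))) :=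
        Hom0.ker_comp_le_ker_map (hker₂ j) (hker₁ (j + 2 * (ε₂ : ℤ)))
    _ ≤ LinearMap.ker (M.map (by omega : j ≤ j + 2 * ((ε₁ + ε₂ : ℕ) : ℤ))) :=
        M.ker_map_le_ker_map _ hshift
end
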